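/- arXiv:1908.10539 — 3 statements merged into one kernel-verified Lean document; each statement's English description precedes it below -/
import Mathlib

section
/- For any i ∈ {0,…,N−1} and any u, v ∈ ℝ^N satisfying A_i u = (N/(N+2)) u and A_i v = (1/(N+2)) v, one has E(u,v) = 0; that is, the two non-constant eigenspaces of the harmonic extension matrix A_i are orthogonal with respect to the energy form. -/
open Matrix Filter

/-- The harmonic extension matrix `A_i` for `SG_N`. -/
noncomputable def harmA (N : ℕ) (i : Fin N) : Matrix (Fin N) (Fin N) ℝ :=
  Matrix.of fun j k =>
    if j = i then (if k = i then 1 else 0)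
    else if k = i then 2 / (N + 2)
    else (1 + if j = k then 1 else 0) / (N + 2)

/-- The energy bilinear form `E(u,v) = ∑_{k<l} (u_k - u_l)(v_k - v_l)` on `ℝ^N`. -/
noncomputable def energy (N : ℕ) (u v : Fin N → ℝ) : ℝ :=
  ∑ k : Fin N, ∑ l : Fin N, if k < l then (u k - u l) * (v k - v l) else 0
theorem harmA_row_self (N : ℕ) (i : Fin N) (w : Fin N → ℝ) :
    (harmA N i).mulVec w i = w i := by
  simp [harmA, Matrix.mulVec, dotProduct]

theorem harmA_row_ne (N : ℕ) (i j : Fin N) (h : j ≠ i) (w : Fin N → ℝ) :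
    (harmA N i).mulVec w j = ((∑ k, w k) + w i + w j) / (N + 2) := by
  have h1 : ∀ k, harmA N i j k * w k =
      (w k + (if k = i then w k else 0) + (if k = j then w k else 0)) / (N + 2) := by
    intro k
    simp only [harmA, Matrix.of_apply, if_neg h]
    by_cases hk : k = i
    · have hkj : k ≠ j := fun e => h (e.symm.trans hk)
      rw [if_pos hk, if_pos hk, if_neg hkj]
      ring
    · by_cases hj : k = j
      · rw [if_neg hk, if_neg hk, if_pos hj, if_pos hj.symm]
        ring
      · rw [if_neg hk, if_neg hk, if_neg hj, if_neg (fun e => hj e.symm)]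
        ring
  simp only [Matrix.mulVec, dotProduct]
  rw [Finset.sum_congr rfl (fun k _ => h1 k), ← Finset.sum_div]
  simp [Finset.sum_add_distrib]

theorem two_energy (N : ℕ) (u v : Fin N → ℝ) :
    2 * energy N u v = 2 * (N * ∑ k, u k * v k) - 2 * ((∑ k, u k) * ∑ k, v k) := by
  have h1 : energy N u v = ∑ k : Fin N, ∑ l : Fin N,
      if l < k then (u k - u l) * (v k - v l) else 0 := by
    unfold energy
    rw [Finset.sum_comm]
    refine Finset.sum_congr rfl fun k _ => Finset.sum_congr rfl fun l _ => ?_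
    split_ifs
    · ring
    · rfl
  have h2 : 2 * energy N u v = ∑ k : Fin N, ∑ l : Fin N, (u k - u l) * (v k - v l) := by
    rw [two_mul]
    nth_rewrite 2 [h1]
    unfold energy
    simp only [← Finset.sum_add_distrib]
    refine Finset.sum_congr rfl fun k _ => Finset.sum_congr rfl fun l _ => ?_
    rcases lt_trichotomy k l with h | h | h
    · simp [h, h.not_gt]
    · simp [h]
    · simp [h, h.not_gt]
  rw [h2]
  have h3 : ∀ k l, (u k - u l) * (v k - v l) =
      u k * v k + u l * v l - u k * v l - v k * u l := by intros; ring
  simp only [h3, Finset.sum_sub_distrib, Finset.sum_add_distrib, ← Finset.mul_sum,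
    ← Finset.sum_mul, Finset.sum_const, Finset.card_univ, Fintype.card_fin, nsmul_eq_mul]
  have h4 : ∑ x, u x * ((N : ℝ) * v x) = N * ∑ x, u x * v x := by
    rw [Finset.mul_sum]
    exact Finset.sum_congr rfl fun x _ => by ring
  linarith

theorem eigenspaces_energy_orthogonal (N : ℕ) (hN : 3 ≤ N) (i : Fin N) (u v : Fin N → ℝ)
    (hu : (harmA N i).mulVec u = ((N : ℝ) / (N + 2)) • u)
    (hv : (harmA N i).mulVec v = (1 / ((N : ℝ) + 2)) • v) :
    energy N u v = 0 := by
  have hN' : (3 : ℝ) ≤ N := by exact_mod_cast hN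
  have hp : (N : ℝ) + 2 ≠ 0 := by positivity
  have hui : u i = 0 := by
    have h := congrFun hu i
    rw [harmA_row_self, Pi.smul_apply, smul_eq_mul] at h
    field_simp at h
    linarith
  have hvi : v i = 0 := by
    have h := congrFun hv i
    rw [harmA_row_self, Pi.smul_apply, smul_eq_mul] at h
    field_simp at h
    have h' : ((N : ℝ) + 1) * v i = 0 := by linarith
    rcases mul_eq_zero.mp h' with h0 | h0
    · linarith
    · exact h0
  have huj : ∀ j, j ≠ i → ((N : ℝ) - 1) * u j = ∑ k, u k := by
    intro j hj
    have h := congrFun hu j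
    rw [harmA_row_ne N i j hj, Pi.smul_apply, smul_eq_mul, hui] at h
    field_simp at h
    linarith
  have hS : ∑ k, v k = 0 := by
    have : Nontrivial (Fin N) := Fin.nontrivial_iff_two_le.mpr (by omega)
    obtain ⟨j, hj⟩ := exists_ne i
    have h := congrFun hv j
    rw [harmA_row_ne N i j hj, Pi.smul_apply, smul_eq_mul, hvi] at h
    field_simp at h
    linarith
  have huv : ((N : ℝ) - 1) * ∑ k, u k * v k = 0 := by
    have h : ∀ k, ((N : ℝ) - 1) * (u k * v k) = (∑ k, u k) * v k := by
      intro k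
      by_cases hk : k = i
      · rw [hk, hvi]; ring
      · rw [← huj k hk]; ring
    rw [Finset.mul_sum, Finset.sum_congr rfl (fun k _ => h k), ← Finset.mul_sum, hS, mul_zero]
  have hz : ∑ k, u k * v k = 0 := by
    rcases mul_eq_zero.mp huv with h0 | h0
    · linarith
    · exact h0
  have h := two_energy N u v
  rw [hz, hS] at h
  linarith
end

section
/- Suppose β ∈ (0,1) is such that for every injective map u : {1,…,N−1} → {0,…,N−1} and every v ∈ ℝ^N one has E(A_{u_{N−1}}^{−1}⋯A_{u_1}^{−1} v) ≤ ((N+2)β)^{2(N−1)} E(v). Let ω = ω_1ω_2… be an infinite word with letters in {0,…,N−1} satisfying liminf_{n→∞} C_N(ω,n)/log n > 1/|log β|. Then the series Σ_{n≥1} (N+2)^{−n} K_n converges, where K_n is the least K ≥ 0 such that E(A_{ω_n}^{−1}⋯A_{ω_1}^{−1} v) ≤ K² E(v) for all v ∈ ℝ^N. -/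
open Matrix Filter

/-- Product `A_{w_m}⁻¹ ⋯ A_{w_1}⁻¹` of inverse harmonic extension matrices
along a finite word `w = w_1 ⋯ w_m` (zero-indexed as `w 0, …, w (m-1)`). -/
noncomputable def wordProdInv (N : ℕ) {m : ℕ} (w : Fin m → Fin N) :
    Matrix (Fin N) (Fin N) ℝ :=
  ((List.ofFn fun j => (harmA N (w j))⁻¹).reverse).prod

/-- Product `A_{ω_n}⁻¹ ⋯ A_{ω_1}⁻¹` along the first `n` letters of the infinite
word `ω = ω_1 ω_2 ⋯` (zero-indexed, so `ω_1 = ω 0`). -/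
noncomputable def prefixProdInv (N : ℕ) (ω : ℕ → Fin N) (n : ℕ) :
    Matrix (Fin N) (Fin N) ℝ :=
  wordProdInv N fun j : Fin n => ω j

open scoped Classical in
/-- Block counting function `C_N(ω,n)`: the number of positions `i` with
`i + (N-2) ≤ n` (one-indexed) at which the `N-1` letters `ω_i, …, ω_{i+N-2}`
are pairwise distinct.  Here `ω` is zero-indexed, so `ω_1 = ω 0`. -/
noncomputable def blockCount (N : ℕ) (ω : ℕ → Fin N) (n : ℕ) : ℕ :=
  ((Finset.range n).filter fun i =>
    i + (N - 2) < n ∧ Function.Injective fun j : Fin (N - 1) => ω (i + j)).card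

/-- Sum-of-squares form of the energy, relative to a base value. -/
lemma energy_eq (N : ℕ) (w : Fin N → ℝ) (c : ℝ) :
    energy N w w = N * ∑ j, (w j - c) ^ 2 - (∑ j, (w j - c)) ^ 2 := by
  have h1 : energy N w w + energy N w w = ∑ k : Fin N, ∑ l : Fin N, (w k - w l) ^ 2 := by
    have h2 : energy N w w = ∑ k : Fin N, ∑ l : Fin N,
        if l < k then (w k - w l) * (w k - w l) else 0 := by
      unfold energy
      rw [Finset.sum_comm]
      refine Finset.sum_congr rfl fun k _ => Finset.sum_congr rfl fun l _ => ?_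
      split_ifs <;> ring
    nth_rewrite 2 [h2]
    unfold energy
    rw [← Finset.sum_add_distrib]
    refine Finset.sum_congr rfl fun k _ => ?_
    rw [← Finset.sum_add_distrib]
    refine Finset.sum_congr rfl fun l _ => ?_
    rcases lt_trichotomy k l with h | h | h
    · simp [h, h.not_gt]; ring
    · simp [h]
    · simp [h, h.not_gt]; ring
  have h3 : ∑ k : Fin N, ∑ l : Fin N, (w k - w l) ^ 2
      = 2 * (N * ∑ j, (w j - c) ^ 2 - (∑ j, (w j - c)) ^ 2) := by
    have key : ∀ x : Fin N → ℝ, ∑ k : Fin N, ∑ l : Fin N, (x k - x l) ^ 2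
        = 2 * (N * ∑ j, x j ^ 2 - (∑ j, x j) ^ 2) := by
      intro x
      have : ∀ k l, (x k - x l) ^ 2 = x k ^ 2 + x l ^ 2 - 2 * (x k * x l) := by
        intro k l; ring
      simp_rw [this, Finset.sum_sub_distrib, Finset.sum_add_distrib, ← Finset.mul_sum]
      simp only [Finset.sum_const, Finset.card_univ, Fintype.card_fin, nsmul_eq_mul]
      rw [← Finset.mul_sum, ← Finset.sum_mul]
      ring
    rw [← key fun j => w j - c]
    simp
  linarith

lemma energy_nonneg (N : ℕ) (w : Fin N → ℝ) : 0 ≤ energy N w w := by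
  unfold energy
  refine Finset.sum_nonneg fun k _ => Finset.sum_nonneg fun l _ => ?_
  split_ifs
  · exact mul_self_nonneg _
  · exact le_rfl

lemma harmA_mulVec_sub (N : ℕ) (i : Fin N) (w : Fin N → ℝ) (j : Fin N) :
    (harmA N i).mulVec w j - w i =
      if j = i then 0 else ((w j - w i) + ∑ k, (w k - w i)) / (N + 2) := by
  have hN : ((N : ℝ) + 2) ≠ 0 := by positivity
  by_cases h : j = i
  · simp [harmA, Matrix.mulVec, dotProduct, h]
  · have : ∀ k, (harmA N i) j k * w k =
        (w k + (if k = i then w k else 0) + (if j = k then w k else 0)) / (N + 2) := by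
      intro k
      by_cases hk : k = i
      · have : j ≠ k := fun e => h (e.trans hk)
        subst hk
        simp [harmA, h]; ring
      · by_cases hjk : j = k
        · subst hjk; simp [harmA, h]; ring
        · simp [harmA, h, hk, hjk]; ring
    simp only [Matrix.mulVec, dotProduct, this, ← Finset.sum_div, Finset.sum_add_distrib, h,
      if_false]
    simp
    field_simp
    ring

lemma energy_le_harmA (N : ℕ) (i : Fin N) (w : Fin N → ℝ) :
    energy N w w ≤ ((N : ℝ) + 2) ^ 2 *
      energy N ((harmA N i).mulVec w) ((harmA N i).mulVec w) := by
  have hN : ((N : ℝ) + 2) ≠ 0 := by positivity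
  rw [energy_eq N w (w i), energy_eq N ((harmA N i).mulVec w) (w i)]
  simp_rw [harmA_mulVec_sub]
  set x : Fin N → ℝ := fun j => w j - w i with hx
  set s := ∑ k, (w k - w i) with hs
  have hxi : w i - w i = 0 := sub_self _
  have e1 : ∑ j, (if j = i then 0 else ((w j - w i) + s) / ((N : ℝ) + 2))
      = N * s / (N + 2) := by
    have : ∀ j, (if j = i then 0 else ((w j - w i) + s) / ((N : ℝ) + 2))
        = ((w j - w i) + s - (if j = i then s else 0)) / (N + 2) := by
      intro j; split_ifs with h
      · subst h; simp
      · simp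
    simp_rw [this]
    rw [← Finset.sum_div, Finset.sum_sub_distrib, Finset.sum_add_distrib, ← hs]
    simp
  have e2 : ∑ j, (if j = i then 0 else ((w j - w i) + s) / ((N : ℝ) + 2)) ^ 2
      = (∑ j, (w j - w i) ^ 2 + (N + 1) * s ^ 2) / (N + 2) ^ 2 := by
    have : ∀ j, (if j = i then 0 else ((w j - w i) + s) / ((N : ℝ) + 2)) ^ 2
        = ((w j - w i) ^ 2 + 2 * s * (w j - w i) + s ^ 2 - (if j = i then s ^ 2 else 0))
          / (N + 2) ^ 2 := by
      intro j; split_ifs with h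
      · subst h; simp
      · field_simp; ring
    simp_rw [this]
    rw [← Finset.sum_div, Finset.sum_sub_distrib, Finset.sum_add_distrib,
      Finset.sum_add_distrib, ← Finset.mul_sum, ← hs]
    simp
    ring
  rw [e1, e2]
  have : ((N : ℝ) + 2) ^ 2 * (N * ((∑ j, (w j - w i) ^ 2 + (N + 1) * s ^ 2) / (N + 2) ^ 2)
      - (N * s / (N + 2)) ^ 2) = N * ∑ j, (w j - w i) ^ 2 + N * s ^ 2 := by
    field_simp; ring
  rw [this]
  have : 0 ≤ (N : ℝ) * s ^ 2 := by positivity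
  nlinarith [sq_nonneg s]

lemma energy_inv_le (N : ℕ) (i : Fin N) (v : Fin N → ℝ) :
    energy N (((harmA N i)⁻¹).mulVec v) (((harmA N i)⁻¹).mulVec v) ≤
      ((N : ℝ) + 2) ^ 2 * energy N v v := by
  by_cases h : IsUnit (harmA N i).det
  · have := energy_le_harmA N i (((harmA N i)⁻¹).mulVec v)
    rwa [Matrix.mulVec_mulVec, Matrix.mul_nonsing_inv _ h, Matrix.one_mulVec] at this
  · rw [Matrix.nonsing_inv_apply_not_isUnit _ h, Matrix.zero_mulVec]
    have : energy N 0 0 = 0 := by simp [energy]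
    rw [this]
    exact mul_nonneg (by positivity) (energy_nonneg N v)

lemma prefixProdInv_succ (N : ℕ) (ω : ℕ → Fin N) (n : ℕ) :
    prefixProdInv N ω (n + 1) = (harmA N (ω n))⁻¹ * prefixProdInv N ω n := by
  simp only [prefixProdInv, wordProdInv]
  rw [List.ofFn_succ']
  simp

lemma prefixProdInv_add (N : ℕ) (ω : ℕ → Fin N) (n m : ℕ) :
    prefixProdInv N ω (n + m)
      = wordProdInv N (fun j : Fin m => ω (n + j)) * prefixProdInv N ω n := by
  induction m with
  | zero => simp [wordProdInv]
  | succ m ih =>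
    rw [← add_assoc, prefixProdInv_succ, ih, ← mul_assoc]
    congr 1
    simp only [wordProdInv]
    rw [List.ofFn_succ' (n := m)]
    simp

open scoped Classical in
/-- Good positions in a residue class. -/
noncomputable def goodRes (N : ℕ) (ω : ℕ → Fin N) (r n : ℕ) : Finset ℕ :=
  (Finset.range n).filter fun i =>
    (i + (N - 2) < n ∧ Function.Injective fun j : Fin (N - 1) => ω (i + j)) ∧ i % (N - 1) = r

lemma energy_prefix_le (N : ℕ) (hN : 3 ≤ N) (β : ℝ)
    (hβ0 : 0 < β) (hβ1 : β < 1)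
    (hblock : ∀ u : Fin (N - 1) → Fin N, Function.Injective u →
      ∀ v : Fin N → ℝ,
        energy N ((wordProdInv N u).mulVec v) ((wordProdInv N u).mulVec v) ≤
          (((N : ℝ) + 2) * β) ^ (2 * (N - 1)) * energy N v v)
    (ω : ℕ → Fin N) (r : ℕ) (v : Fin N → ℝ) (n : ℕ) :
    energy N ((prefixProdInv N ω n).mulVec v) ((prefixProdInv N ω n).mulVec v) ≤
      (((N : ℝ) + 2) ^ n * β ^ ((N - 1) * (goodRes N ω r n).card)) ^ 2 * energy N v v := by
  induction n using Nat.strong_induction_on with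
  | _ n ih =>
  rcases n with _ | n
  · simp [prefixProdInv, wordProdInv, goodRes]
  by_cases hg : N - 1 ≤ n + 1 ∧ (Function.Injective fun j : Fin (N - 1) => ω ((n + 1 - (N - 1)) + j))
      ∧ (n + 1 - (N - 1)) % (N - 1) = r
  · obtain ⟨h1, h2, h3⟩ := hg
    obtain ⟨m, hm⟩ : ∃ m, n + 1 = m + (N - 1) := ⟨n + 1 - (N - 1), by omega⟩
    have hm' : n + 1 - (N - 1) = m := by omega
    rw [hm'] at h2 h3
    rw [hm]
    have hcard : (goodRes N ω r (m + (N - 1))).card ≤ (goodRes N ω r m).card + 1 := by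
      refine le_trans (Finset.card_le_card ?_) (Finset.card_insert_le m _)
      intro i hi
      simp only [goodRes, Finset.mem_filter, Finset.mem_range, Finset.mem_insert] at hi ⊢
      obtain ⟨hi1, ⟨hi2, hi3⟩, hi4⟩ := hi
      by_cases him : i = m
      · exact Or.inl him
      · right
        have hle : i + (N - 1) ≤ m := by
          have hlt : i < m := by omega
          have hmod : i ≡ m [MOD (N - 1)] := by
            unfold Nat.ModEq; rw [hi4, h3]
          have hdvd := (Nat.modEq_iff_dvd' hlt.le).1 hmod
          have := Nat.le_of_dvd (by omega) hdvd
          omega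
        exact ⟨by omega, ⟨by omega, hi3⟩, hi4⟩
    rw [prefixProdInv_add, ← Matrix.mulVec_mulVec]
    refine (hblock _ h2 _).trans ?_
    refine (mul_le_mul_of_nonneg_left (ih m (by omega)) (by positivity)).trans ?_
    rw [← mul_assoc]
    refine mul_le_mul_of_nonneg_right ?_ (energy_nonneg N v)
    calc (((N : ℝ) + 2) * β) ^ (2 * (N - 1)) *
          (((N : ℝ) + 2) ^ m * β ^ ((N - 1) * (goodRes N ω r m).card)) ^ 2
        = (((N : ℝ) + 2) ^ (m + (N - 1)) *
            β ^ ((N - 1) * ((goodRes N ω r m).card + 1))) ^ 2 := by rw [mul_pow ((N : ℝ) + 2) β]; ring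
      _ ≤ _ := by
        have := pow_le_pow_of_le_one hβ0.le hβ1.le (Nat.mul_le_mul_left (N - 1) hcard)
        gcongr
  · have hcard : (goodRes N ω r (n + 1)).card ≤ (goodRes N ω r n).card := by
      refine Finset.card_le_card ?_
      intro i hi
      simp only [goodRes, Finset.mem_filter, Finset.mem_range] at hi ⊢
      obtain ⟨hi1, ⟨hi2, hi3⟩, hi4⟩ := hi
      by_cases hlt : i + (N - 2) < n
      · exact ⟨by omega, ⟨hlt, hi3⟩, hi4⟩
      · exfalso
        have hi : n + 1 - (N - 1) = i := by omega
        exact hg ⟨by omega, by rw [hi]; exact hi3, by rw [hi]; exact hi4⟩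
    rw [prefixProdInv_succ, ← Matrix.mulVec_mulVec]
    refine (energy_inv_le N _ _).trans ?_
    refine (mul_le_mul_of_nonneg_left (ih n (by omega)) (by positivity)).trans ?_
    rw [← mul_assoc]
    refine mul_le_mul_of_nonneg_right ?_ (energy_nonneg N v)
    calc ((N : ℝ) + 2) ^ 2 *
          (((N : ℝ) + 2) ^ n * β ^ ((N - 1) * (goodRes N ω r n).card)) ^ 2
        = (((N : ℝ) + 2) ^ (n + 1) *
            β ^ ((N - 1) * (goodRes N ω r n).card)) ^ 2 := by ring
      _ ≤ _ := by
        have := pow_le_pow_of_le_one hβ0.le hβ1.le (Nat.mul_le_mul_left (N - 1) hcard)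
        gcongr

lemma exists_goodRes (N : ℕ) (hN : 3 ≤ N) (ω : ℕ → Fin N) (n : ℕ) :
    ∃ r, blockCount N ω n ≤ (N - 1) * (goodRes N ω r n).card := by
  classical
  have hsum : blockCount N ω n = ∑ r ∈ Finset.range (N - 1), (goodRes N ω r n).card := by
    unfold blockCount
    rw [Finset.card_eq_sum_card_fiberwise (f := fun i => i % (N - 1))
      (t := Finset.range (N - 1))]
    · refine Finset.sum_congr rfl fun r _ => ?_
      rw [Finset.filter_filter]
      unfold goodRes
      congr
    · intro i _
      simp only [Finset.coe_range, Set.mem_Iio]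
      exact Nat.mod_lt _ (by omega)
  by_contra! h
  have hlt : ∑ r ∈ Finset.range (N - 1), (N - 1) * (goodRes N ω r n).card
      < ∑ r ∈ Finset.range (N - 1), blockCount N ω n :=
    Finset.sum_lt_sum_of_nonempty ⟨0, by simp; omega⟩ fun r _ => h r
  rw [← Finset.mul_sum, ← hsum] at hlt
  simp at hlt

theorem summable_energy_opnorm_series (N : ℕ) (hN : 3 ≤ N) (β : ℝ)
    (hβ0 : 0 < β) (hβ1 : β < 1)
    (hblock : ∀ u : Fin (N - 1) → Fin N, Function.Injective u →
      ∀ v : Fin N → ℝ,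
        energy N ((wordProdInv N u).mulVec v) ((wordProdInv N u).mulVec v) ≤
          (((N : ℝ) + 2) * β) ^ (2 * (N - 1)) * energy N v v)
    (ω : ℕ → Fin N)
    (hω : (↑(1 / |Real.log β|) : EReal) <
      Filter.liminf (fun n : ℕ =>
        (((blockCount N ω n : ℝ) / Real.log n : ℝ) : EReal)) Filter.atTop)
    (K : ℕ → ℝ)
    (hK : ∀ n : ℕ, IsLeast {k : ℝ | 0 ≤ k ∧ ∀ v : Fin N → ℝ,
      energy N ((prefixProdInv N ω n).mulVec v) ((prefixProdInv N ω n).mulVec v) ≤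
        k ^ 2 * energy N v v} (K n)) :
    Summable fun n : ℕ => (((N : ℝ) + 2) ^ n)⁻¹ * K n := by
  have hbound : ∀ n, (((N : ℝ) + 2) ^ n)⁻¹ * K n ≤ β ^ blockCount N ω n := by
    intro n
    obtain ⟨r, hr⟩ := exists_goodRes N hN ω n
    have hKn : K n ≤ ((N : ℝ) + 2) ^ n * β ^ ((N - 1) * (goodRes N ω r n).card) :=
      (hK n).2 ⟨by positivity, fun v => energy_prefix_le N hN β hβ0 hβ1 hblock ω r v n⟩
    have h2 := pow_le_pow_of_le_one hβ0.le hβ1.le hr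
    rw [inv_mul_le_iff₀ (by positivity)]
    exact hKn.trans (by gcongr)
  have hlog : Real.log β < 0 := Real.log_neg hβ0 hβ1
  obtain ⟨p, hp1, hp2⟩ := EReal.lt_iff_exists_real_btwn.1 hω
  have hp1' : 1 / |Real.log β| < p := by exact_mod_cast hp1
  have hq : 1 < p * |Real.log β| := by
    rwa [div_lt_iff₀ (abs_pos.2 hlog.ne)] at hp1'
  have hev := Filter.eventually_lt_of_lt_liminf hp2
  have hs : Summable fun n : ℕ => (n : ℝ) ^ (-(p * |Real.log β|)) :=
    Real.summable_nat_rpow.2 (by linarith)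
  refine summable_of_isBigO_nat hs ?_
  refine Asymptotics.IsBigO.of_bound 1 ?_
  filter_upwards [hev, Filter.eventually_ge_atTop 2] with n hn hn2
  have hn' : p < (blockCount N ω n : ℝ) / Real.log n := by exact_mod_cast hn
  have hn1 : (1 : ℝ) < n := by exact_mod_cast hn2
  have hlogn : 0 < Real.log n := Real.log_pos hn1
  rw [lt_div_iff₀ hlogn] at hn'
  have h0 : 0 ≤ (((N : ℝ) + 2) ^ n)⁻¹ * K n := mul_nonneg (by positivity) (hK n).1.1
  rw [Real.norm_of_nonneg h0, one_mul, Real.norm_of_nonneg (by positivity)]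
  refine (hbound n).trans ?_
  rw [Real.rpow_def_of_pos (by linarith), ← Real.rpow_natCast, Real.rpow_def_of_pos hβ0]
  apply Real.exp_le_exp.2
  rw [abs_of_neg hlog]
  nlinarith
end

section
/- Let N = 3 and let A_0, A_1, A_2 be the harmonic extension matrices for SG_3. Suppose μ : {0,1,2}×{0,1,2} → ℝ satisfies 0 < μ_{ij}, μ_{ii} < 1/9 for each i, and μ_{ij} < 1/√(17+4√13) for i ≠ j. Then for every pair (i,j), (3/5)²·μ_{ij}·K_{ij} < 1, where K_{ij} is the least K ≥ 0 such that E((A_i A_j)^{−1} v) ≤ K² E(v) for all v ∈ ℝ³. -/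
open Matrix Filter

theorem psd_aux (p q r x y : ℝ) (hp : 0 < p) (h : p * r - q ^ 2 = 0) :
    0 ≤ p * x ^ 2 + 2 * q * (x * y) + r * y ^ 2 := by
  have h1 : p * (p * x ^ 2 + 2 * q * (x * y) + r * y ^ 2) = (p * x + q * y) ^ 2 := by
    linear_combination y ^ 2 * h
  have h2 : 0 ≤ p * (p * x ^ 2 + 2 * q * (x * y) + r * y ^ 2) := by
    rw [h1]; exact sq_nonneg _
  exact nonneg_of_mul_nonneg_right h2 hp

theorem energy_three (v : Fin 3 → ℝ) :
    energy 3 v v = (v 0 - v 1) ^ 2 + (v 0 - v 2) ^ 2 + (v 1 - v 2) ^ 2 := by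
  simp [energy, Fin.sum_univ_three]
  ring

theorem harmA_mulVec (i : Fin 3) (w : Fin 3 → ℝ) :
    (harmA 3 i).mulVec w = fun j => if j = i then w i
      else (w 0 + w 1 + w 2 + w i + w j) / 5 := by
  funext j
  fin_cases i <;> fin_cases j <;>
    simp [harmA, Matrix.mulVec, dotProduct, Fin.sum_univ_three] <;> ring

theorem harmA_det (i : Fin 3) : (harmA 3 i).det ≠ 0 := by
  fin_cases i <;> simp [harmA, Matrix.det_fin_three] <;> norm_num

theorem inv_bound (i j : Fin 3) (c : ℝ)
    (h : ∀ w : Fin 3 → ℝ, 0 ≤ c * energy 3 ((harmA 3 i).mulVec ((harmA 3 j).mulVec w))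
      ((harmA 3 i).mulVec ((harmA 3 j).mulVec w)) - energy 3 w w) (v : Fin 3 → ℝ) :
    energy 3 ((harmA 3 i * harmA 3 j)⁻¹.mulVec v)
          ((harmA 3 i * harmA 3 j)⁻¹.mulVec v) ≤ c * energy 3 v v := by
  have hd : IsUnit (harmA 3 i * harmA 3 j).det := by
    rw [Matrix.det_mul]
    exact (mul_ne_zero (harmA_det i) (harmA_det j)).isUnit
  have h1 := h ((harmA 3 i * harmA 3 j)⁻¹.mulVec v)
  rw [Matrix.mulVec_mulVec, Matrix.mulVec_mulVec, Matrix.mul_nonsing_inv _ hd,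
    Matrix.one_mulVec] at h1
  linarith

theorem diag_form (i : Fin 3) (w : Fin 3 → ℝ) :
    0 ≤ 625 * energy 3 ((harmA 3 i).mulVec ((harmA 3 i).mulVec w))
      ((harmA 3 i).mulVec ((harmA 3 i).mulVec w)) - energy 3 w w := by
  fin_cases i <;> simp only [energy_three, harmA_mulVec] <;> simp
  · have := psd_aux (160) (-80) (40) (w 0 - w 2) (w 1 - w 2)
      (by norm_num) (by norm_num)
    linear_combination this
  · have := psd_aux (40) (-80) (160) (w 0 - w 2) (w 1 - w 2)
      (by norm_num) (by norm_num)
    linear_combination this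
  · have := psd_aux (40) (40) (40) (w 0 - w 2) (w 1 - w 2)
      (by norm_num) (by norm_num)
    linear_combination this

theorem off_form (i j : Fin 3) (hij : i ≠ j) (s : ℝ) (hs : s ^ 2 = 13) (h3 : 3 ≤ s)
    (w : Fin 3 → ℝ) :
    0 ≤ (625 / 81 * (17 + 4 * s)) * energy 3 ((harmA 3 i).mulVec ((harmA 3 j).mulVec w))
      ((harmA 3 i).mulVec ((harmA 3 j).mulVec w)) - energy 3 w w := by
  fin_cases i <;> fin_cases j <;> first | exact absurd rfl hij | skip
  all_goals simp only [energy_three, harmA_mulVec]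
  all_goals simp
  · have := psd_aux (184/27 + 56/27 * s) (-76/9 + -20/9 * s) (28/3 + 8/3 * s) (w 0 - w 2) (w 1 - w 2)
      (by linarith) (by ring_nf; rw [hs]; norm_num)
    linear_combination this
  · have := psd_aux (184/27 + 56/27 * s) (44/27 + 4/27 * s) (-20/27 + 8/27 * s) (w 0 - w 2) (w 1 - w 2)
      (by linarith) (by ring_nf; rw [hs]; norm_num)
    linear_combination this
  · have := psd_aux (28/3 + 8/3 * s) (-76/9 + -20/9 * s) (184/27 + 56/27 * s) (w 0 - w 2) (w 1 - w 2)
      (by linarith) (by ring_nf; rw [hs]; norm_num)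
    linear_combination this
  · have := psd_aux (-20/27 + 8/27 * s) (44/27 + 4/27 * s) (184/27 + 56/27 * s) (w 0 - w 2) (w 1 - w 2)
      (by linarith) (by ring_nf; rw [hs]; norm_num)
    linear_combination this
  · have := psd_aux (28/3 + 8/3 * s) (-8/9 + -4/9 * s) (-20/27 + 8/27 * s) (w 0 - w 2) (w 1 - w 2)
      (by linarith) (by ring_nf; rw [hs]; norm_num)
    linear_combination this
  · have := psd_aux (-20/27 + 8/27 * s) (-8/9 + -4/9 * s) (28/3 + 8/3 * s) (w 0 - w 2) (w 1 - w 2)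
      (by linarith) (by ring_nf; rw [hs]; norm_num)
    linear_combination this

theorem weights_give_contraction_SG3 (μ : Fin 3 → Fin 3 → ℝ)
    (hpos : ∀ i j, 0 < μ i j)
    (hdiag : ∀ i, μ i i < 1 / 9)
    (hoff : ∀ i j, i ≠ j → μ i j < 1 / Real.sqrt (17 + 4 * Real.sqrt 13))
    (K : Fin 3 → Fin 3 → ℝ)
    (hK : ∀ i j, IsLeast {k : ℝ | 0 ≤ k ∧ ∀ v : Fin 3 → ℝ,
      energy 3 ((harmA 3 i * harmA 3 j)⁻¹.mulVec v)
          ((harmA 3 i * harmA 3 j)⁻¹.mulVec v) ≤ k ^ 2 * energy 3 v v} (K i j)) :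
    ∀ i j, ((3 : ℝ) / 5) ^ 2 * μ i j * K i j < 1 := by
  intro i j
  by_cases hij : i = j
  · subst hij
    have hk : K i i ≤ 25 := (hK i i).2 ⟨by norm_num, fun v => by
      have := inv_bound i i 625 (diag_form i) v
      norm_num
      exact this⟩
    have h1 := hdiag i
    have h2 := mul_le_mul_of_nonneg_left hk (hpos i i).le
    linarith
  · have hs : Real.sqrt 13 ^ 2 = 13 := Real.sq_sqrt (by norm_num)
    have h3 : (3 : ℝ) ≤ Real.sqrt 13 := Real.le_sqrt_of_sq_le (by norm_num)
    have ht : Real.sqrt (17 + 4 * Real.sqrt 13) ^ 2 = 17 + 4 * Real.sqrt 13 :=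
      Real.sq_sqrt (by positivity)
    have htp : 0 < Real.sqrt (17 + 4 * Real.sqrt 13) := Real.sqrt_pos.2 (by positivity)
    have h1 := hoff i j hij
    have hk : K i j ≤ 25 / 9 * Real.sqrt (17 + 4 * Real.sqrt 13) :=
      (hK i j).2 ⟨by positivity, fun v => by
        have := inv_bound i j _ (off_form i j hij _ hs h3) v
        rw [mul_pow, ht]
        norm_num at this ⊢
        exact this⟩
    rw [lt_div_iff₀ htp] at h1
    have h2 := mul_le_mul_of_nonneg_left hk (hpos i j).le
    linarith
end
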